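/- Let F be a field of characteristic zero, N ≥ 1, and g ∈ GL_N(F). Set θ(g) = (g⁻¹)ᵀ. Then the characteristic polynomial of the 2N×2N block matrix i(gθ) = [[0, g],[θ(g), 0]] is squarefree (split with simple roots over an algebraic closure) if and only if the characteristic polynomial of g·θ(g) is squarefree. -/

import Mathlib

open scoped Matrix

open Polynomial in
/-- The characteristic polynomial of an off-diagonal block matrix `[[0, A], [B, 0]]` is
`χ_{AB}(X²)`. -/
theorem Matrix.charpoly_fromBlocks_zero_diag {R n : Type*} [CommRing R] [Fintype n]
    [DecidableEq n] (A B : Matrix n n R) :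
    (Matrix.fromBlocks 0 A B 0).charpoly = expand R 2 (A * B).charpoly := by
  have hexpand : expand R 2 (A * B).charpoly =
      (Matrix.scalar n ((X : R[X]) ^ 2) - A.map C * B.map C).det := by
    rw [Matrix.charpoly, AlgHom.map_det]
    congr 1
    ext i j : 1
    have hmap (i j : n) : (A.map C * B.map C) i j = C ((A * B) i j) := by
      rw [← Matrix.map_mul, Matrix.map_apply]
    by_cases hij : i = j <;> simp [hij, hmap]
  have hprod : Matrix.charmatrix (Matrix.fromBlocks 0 A B 0) *
      Matrix.fromBlocks (Matrix.scalar n (X : R[X])) 0 (B.map C) 1 =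
      Matrix.fromBlocks (Matrix.scalar n ((X : R[X]) ^ 2) - A.map C * B.map C) (-A.map C) 0
        (Matrix.scalar n (X : R[X])) := by
    rw [Matrix.charmatrix_fromBlocks, Matrix.fromBlocks_multiply]
    have hcomm : B.map C * Matrix.scalar n (X : R[X]) = Matrix.scalar n (X : R[X]) * B.map C :=
      (Matrix.scalar_commute _ (fun _ => Commute.all _ _) _).symm
    have hzero : Matrix.charmatrix (0 : Matrix n n R) = Matrix.scalar n (X : R[X]) := by
      simp [Matrix.charmatrix]
    rw [hzero, Matrix.neg_mul, Matrix.neg_mul _ (Matrix.scalar n X), hcomm, ← map_mul, ← sq]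
    simp [sub_eq_add_neg]
  have hdet := congrArg Matrix.det hprod
  rw [Matrix.det_mul, Matrix.det_fromBlocks_zero₁₂, Matrix.det_fromBlocks_zero₂₁,
    Matrix.det_one, mul_one, ← hexpand] at hdet
  have hmonic : (Matrix.scalar n (X : R[X])).det.Monic := by
    simp
  exact hmonic.isRegular.right hdet

open Polynomial in
/-- Over a field in which `n ≠ 0`, the polynomial `p(Xⁿ)` is separable when `p` is separable with
nonzero constant term. -/
theorem Polynomial.Separable.expand_of_coeff_zero_ne_zero {F : Type*} [Field F] {p : F[X]}
    {n : ℕ} (hn : (n : F) ≠ 0) (hp : p.Separable) (h0 : p.coeff 0 ≠ 0) :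
    (expand F n p).Separable := by
  have hn0 : 0 < n := Nat.pos_of_ne_zero (by rintro rfl; simp at hn)
  rw [separable_def, derivative_expand]
  refine IsCoprime.mul_right (IsCoprime.map hp (expand F n).toRingHom) (IsCoprime.mul_right ?_ ?_)
  · exact (isCoprime_one_right.of_isCoprime_of_dvd_right
      (isUnit_iff_dvd_one.1 (by simpa using isUnit_C.2 hn.isUnit)))
  · refine IsCoprime.pow_right (IsCoprime.symm ?_)
    rw [irreducible_X.coprime_iff_not_dvd, X_dvd_iff]
    simpa [coeff_expand hn0] using h0

open Polynomial in
/-- Over a field of characteristic zero, `p(Xⁿ)` is squarefree if and only if `p` is, provided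
`p` has nonzero constant term. -/
theorem Polynomial.squarefree_expand_iff {F : Type*} [Field F] [CharZero F] {p : F[X]}
    {n : ℕ} (hn : 0 < n) (h0 : p.coeff 0 ≠ 0) :
    Squarefree (expand F n p) ↔ Squarefree p := by
  refine ⟨fun h q hq => ?_, fun h => ?_⟩
  · have := isLocalHom_expand F hn
    refine isUnit_of_map_unit (expand F n) q (h _ ?_)
    rw [← map_mul]
    exact _root_.map_dvd (expand F n) hq
  · exact ((PerfectField.separable_iff_squarefree.2 h).expand_of_coeff_zero_ne_zero
      (Nat.cast_ne_zero.2 hn.ne') h0).squarefree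

/-- For `g ∈ GL_N(F)` and `θ(g) = (g⁻¹)ᵀ`, the characteristic polynomial of the block
matrix `[[0, g],[θ(g), 0]]` is squarefree if and only if the characteristic polynomial of
`g * θ(g)` is squarefree. -/
theorem stmt_3 {F : Type*} [Field F] [CharZero F] {N : ℕ} (hN : 1 ≤ N)
    (g : GL (Fin N) F) :
    Squarefree (Matrix.fromBlocks 0 (g : Matrix (Fin N) (Fin N) F)
        (((g⁻¹ : GL (Fin N) F) : Matrix (Fin N) (Fin N) F)ᵀ) 0).charpoly ↔
    Squarefree ((g : Matrix (Fin N) (Fin N) F) *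
        ((g⁻¹ : GL (Fin N) F) : Matrix (Fin N) (Fin N) F)ᵀ).charpoly := by
  rw [Matrix.charpoly_fromBlocks_zero_diag]
  refine Polynomial.squarefree_expand_iff two_pos fun h0 => ?_
  have hdet := Matrix.det_eq_sign_charpoly_coeff ((g : Matrix (Fin N) (Fin N) F) *
    ((g⁻¹ : GL (Fin N) F) : Matrix (Fin N) (Fin N) F)ᵀ)
  rw [h0, mul_zero, Matrix.det_mul, Matrix.det_transpose, ← Matrix.det_mul, Units.mul_inv,
    Matrix.det_one] at hdet
  exact one_ne_zero hdet
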